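/- As n → ∞, n^{-3}·Var( ∑_{1≤i<j≤n} 1_{gcd(X_i,X_j)=1} ) → ∏_{p prime} (1 − 2/p² + 1/p³) − 36/π⁴. -/

import Mathlib

open MeasureTheory ProbabilityTheory Filter Real

/-- The joint law of `n` i.i.d. random variables, each uniformly distributed on
`{1, 2, …, n}` (the coordinates `ω ↦ ω i` are the random variables `X_i`). -/
noncomputable def unifVec (n : ℕ) : Measure (Fin n → ℕ) :=
  Measure.pi fun _ => uniformOn (Set.Icc 1 n)

/-!
The sum is a U-statistic with kernel `K(x, y) = 1_{gcd(x, y) = 1}`. The covariance of two of its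
terms depends only on the number of indices they share, and the coefficient of `n³` in the variance
is the variance of the Hájek projection `φ(x) = 𝔼[K(x, Y)]`. By Möbius inversion
`φ(x) = ∑_d μ(d) r_n(d) 1_{d ∣ x}`, where `r_n(d) → 1/d` is the proportion of multiples of `d`
among `1, …, n`, and dominated convergence gives `𝔼[φ] → ∑_d μ(d)/d² = 6/π²` and
`𝔼[φ²] → ∑_{d, e} δ(d) δ(e) / lcm(d, e)` with `δ(d) = μ(d)/d`. Grouping the pairs by their least
common multiple turns the last sum into `∑_m κ(m)/m`, where `κ * ζ = (δ * ζ)²` pointwise. Hence `κ`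
is multiplicative, and its Euler product is the one in the theorem.
-/

section EdgeStatistic

variable {Ω E ι : Type*} [MeasurableSpace Ω] [MeasurableSpace E] {P : Measure Ω} {ν : Measure E}
  {X : ι → Ω → E} {K : Sym2 E → ℝ}

/-- The Hájek projection `x ↦ 𝔼[K(x, Y)]`, with `Y` of law `ν`, of a symmetric kernel. Symmetric
functions of two variables are encoded as functions on unordered pairs. -/
noncomputable def kernelProjection (K : Sym2 E → ℝ) (ν : Measure E) (x : E) : ℝ :=
  ∫ y, K s(x, y) ∂ν

lemma hasLaw_pair_of_iIndepFun (hX : ∀ i, HasLaw (X i) ν P) (hind : iIndepFun X P) {i j : ι}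
    (hij : i ≠ j) : HasLaw (fun ω => (X i ω, X j ω)) (ν.prod ν) P := by
  have := hind.isProbabilityMeasure
  exact (indepFun_iff_hasLaw_prodMk_prod (hX i) (hX j)).1 (hind.indepFun hij)

lemma hasLaw_triple_of_iIndepFun (hX : ∀ i, HasLaw (X i) ν P) (hind : iIndepFun X P) {i j k : ι}
    (hij : i ≠ j) (hik : i ≠ k) (hjk : j ≠ k) :
    HasLaw (fun ω => (X i ω, X j ω, X k ω)) (ν.prod (ν.prod ν)) P := by
  have := hind.isProbabilityMeasure
  exact (indepFun_iff_hasLaw_prodMk_prod (hX i) (hasLaw_pair_of_iIndepFun hX hind hjk)).1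
    (hind.indepFun_prodMk₀ (fun i => (hX i).aemeasurable) j k i hij.symm hik.symm).symm

lemma memLp_edgeTerm (hX : ∀ i, HasLaw (X i) ν P) (hind : iIndepFun X P)
    (hK : MemLp (fun z : E × E => K s(z.1, z.2)) 2 (ν.prod ν)) {i j : ι} (hij : i ≠ j) :
    MemLp (fun ω => K s(X i ω, X j ω)) 2 P := by
  have hlaw := hasLaw_pair_of_iIndepFun hX hind hij
  rw [← hlaw.map_eq] at hK
  exact hK.comp_of_map hlaw.aemeasurable

lemma variance_edgeTerm (hX : ∀ i, HasLaw (X i) ν P) (hind : iIndepFun X P)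
    (hK : MemLp (fun z : E × E => K s(z.1, z.2)) 2 (ν.prod ν)) {i j : ι} (hij : i ≠ j) :
    Var[fun ω => K s(X i ω, X j ω); P] = Var[fun z : E × E => K s(z.1, z.2); ν.prod ν] := by
  have hlaw := hasLaw_pair_of_iIndepFun hX hind hij
  rw [← hlaw.map_eq, variance_map (hlaw.map_eq ▸ hK.aemeasurable) hlaw.aemeasurable]
  rfl

lemma covariance_edgeTerm_of_disjoint (hX : ∀ i, HasLaw (X i) ν P) (hind : iIndepFun X P)
    (hK : MemLp (fun z : E × E => K s(z.1, z.2)) 2 (ν.prod ν)) {i j k l : ι}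
    (hij : i ≠ j) (hkl : k ≠ l) (hik : i ≠ k) (hil : i ≠ l) (hjk : j ≠ k) (hjl : j ≠ l) :
    cov[fun ω => K s(X i ω, X j ω), fun ω => K s(X k ω, X l ω); P] = 0 := by
  have hpairs := hind.indepFun_prodMk_prodMk₀ (fun i => (hX i).aemeasurable) i j k l
    hik hil hjk hjl
  have hlaw₁ := hasLaw_pair_of_iIndepFun hX hind hij
  have hlaw₂ := hasLaw_pair_of_iIndepFun hX hind hkl
  have hterms := hpairs.comp₀ hlaw₁.aemeasurable hlaw₂.aemeasurable
    (hlaw₁.map_eq ▸ hK.aemeasurable) (hlaw₂.map_eq ▸ hK.aemeasurable)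
  exact hterms.covariance_eq_zero (memLp_edgeTerm hX hind hK hij) (memLp_edgeTerm hX hind hK hkl)

lemma integral_kernel_mul_kernel [SFinite ν] (x : E) :
    ∫ z, K s(x, z.1) * K s(x, z.2) ∂ν.prod ν = kernelProjection K ν x ^ 2 := by
  rw [integral_prod_mul (fun y => K s(x, y)) (fun y => K s(x, y)), sq]
  rfl

variable [IsProbabilityMeasure ν]

lemma integral_kernelProjection (hK : MemLp (fun z : E × E => K s(z.1, z.2)) 2 (ν.prod ν)) :
    ∫ x, kernelProjection K ν x ∂ν = ∫ z, K s(z.1, z.2) ∂ν.prod ν :=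
  (integral_prod _ (hK.integrable one_le_two)).symm

lemma integral_edgeTerm (hX : ∀ i, HasLaw (X i) ν P) (hind : iIndepFun X P)
    (hK : MemLp (fun z : E × E => K s(z.1, z.2)) 2 (ν.prod ν)) {i j : ι} (hij : i ≠ j) :
    ∫ ω, K s(X i ω, X j ω) ∂P = ∫ x, kernelProjection K ν x ∂ν := by
  rw [integral_kernelProjection hK]
  exact (hasLaw_pair_of_iIndepFun hX hind hij).integral_comp hK.aestronglyMeasurable

lemma integrable_kernel_mul_kernel (hK : MemLp (fun z : E × E => K s(z.1, z.2)) 2 (ν.prod ν)) :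
    Integrable (fun z : E × E × E => K s(z.1, z.2.1) * K s(z.1, z.2.2)) (ν.prod (ν.prod ν)) := by
  have hfst : MemLp (fun z : E × E × E => K s(z.1, z.2.1)) 2 (ν.prod (ν.prod ν)) :=
    hK.comp_measurePreserving ((MeasurePreserving.id ν).prod measurePreserving_fst)
  have hsnd : MemLp (fun z : E × E × E => K s(z.1, z.2.2)) 2 (ν.prod (ν.prod ν)) :=
    hK.comp_measurePreserving ((MeasurePreserving.id ν).prod measurePreserving_snd)
  exact hfst.integrable_mul hsnd

lemma memLp_kernelProjection (hK : MemLp (fun z : E × E => K s(z.1, z.2)) 2 (ν.prod ν)) :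
    MemLp (kernelProjection K ν) 2 ν := by
  have hmeas : AEStronglyMeasurable (kernelProjection K ν) ν :=
    hK.aestronglyMeasurable.integral_prod_right'
  rw [memLp_two_iff_integrable_sq hmeas]
  refine (integrable_kernel_mul_kernel hK).integral_prod_left.congr (ae_of_all _ fun x => ?_)
  exact integral_kernel_mul_kernel x

lemma covariance_edgeTerm_of_shared_vertex (hX : ∀ i, HasLaw (X i) ν P) (hind : iIndepFun X P)
    (hK : MemLp (fun z : E × E => K s(z.1, z.2)) 2 (ν.prod ν)) {i j k : ι}
    (hij : i ≠ j) (hik : i ≠ k) (hjk : j ≠ k) :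
    cov[fun ω => K s(X i ω, X j ω), fun ω => K s(X i ω, X k ω); P]
      = Var[kernelProjection K ν; ν] := by
  have := hind.isProbabilityMeasure
  have hprod : ∫ ω, K s(X i ω, X j ω) * K s(X i ω, X k ω) ∂P
      = ∫ x, kernelProjection K ν x ^ 2 ∂ν := by
    have hint := integrable_kernel_mul_kernel hK
    calc ∫ ω, K s(X i ω, X j ω) * K s(X i ω, X k ω) ∂P
        = ∫ z, K s(z.1, z.2.1) * K s(z.1, z.2.2) ∂ν.prod (ν.prod ν) :=
          (hasLaw_triple_of_iIndepFun hX hind hij hik hjk).integral_comp hint.aestronglyMeasurable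
      _ = ∫ x, kernelProjection K ν x ^ 2 ∂ν := by
          rw [integral_prod _ hint]
          simp only [integral_kernel_mul_kernel]
  rw [covariance_eq_sub (memLp_edgeTerm hX hind hK hij) (memLp_edgeTerm hX hind hK hik),
    variance_eq_sub (memLp_kernelProjection hK), integral_edgeTerm hX hind hK hij,
    integral_edgeTerm hX hind hK hik, ← sq]
  exact congrArg (· - _) hprod

lemma covariance_edgeTerm [DecidableEq ι] (hX : ∀ i, HasLaw (X i) ν P) (hind : iIndepFun X P)
    (hK : MemLp (fun z : E × E => K s(z.1, z.2)) 2 (ν.prod ν)) {e f : Sym2 ι}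
    (he : ¬ e.IsDiag) (hf : ¬ f.IsDiag) :
    cov[fun ω => K (e.map (X · ω)), fun ω => K (f.map (X · ω)); P]
      = Var[kernelProjection K ν; ν] * (e.toFinset ∩ f.toFinset).card
        + (Var[fun z : E × E => K s(z.1, z.2); ν.prod ν] - 2 * Var[kernelProjection K ν; ν])
          * if e = f then 1 else 0 := by
  by_cases hshared : ∃ i, i ∈ e ∧ i ∈ f
  · obtain ⟨i, ⟨j, rfl⟩, ⟨k, rfl⟩⟩ := hshared
    have hij : i ≠ j := by simpa using he
    have hik : i ≠ k := by simpa using hf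
    rcases eq_or_ne j k with rfl | hjk
    · have hcard : (s(i, j).toFinset ∩ s(i, j).toFinset).card = 2 := by
        rw [Finset.inter_self, Sym2.card_toFinset_of_not_isDiag _ he]
      simp only [Sym2.map_mk, hcard, if_true]
      rw [covariance_self (memLp_edgeTerm hX hind hK hij).aemeasurable,
        variance_edgeTerm hX hind hK hij]
      push_cast
      ring
    · have hinter : s(i, j).toFinset ∩ s(i, k).toFinset = {i} := by
        ext v
        simp only [Finset.mem_inter, Sym2.mem_toFinset, Sym2.mem_iff, Finset.mem_singleton]
        grind
      simp only [Sym2.map_mk, hinter, Finset.card_singleton, Sym2.congr_right, hjk, if_false]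
      rw [covariance_edgeTerm_of_shared_vertex hX hind hK hij hik hjk]
      simp
  · have hinter : e.toFinset ∩ f.toFinset = ∅ := by
      ext v
      simpa using fun hve hvf => hshared ⟨v, hve, hvf⟩
    induction e with | _ i j
    induction f with | _ k l
    have hne : s(i, j) ≠ s(k, l) := fun h => hshared ⟨i, by simp, h ▸ by simp⟩
    have hdisj : i ≠ k ∧ i ≠ l ∧ j ≠ k ∧ j ≠ l := by
      refine ⟨?_, ?_, ?_, ?_⟩ <;> rintro rfl <;> simp at hshared
    obtain ⟨hik, hil, hjk, hjl⟩ := hdisj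
    simp only [Sym2.map_mk, hinter, Finset.card_empty, hne, if_false]
    rw [covariance_edgeTerm_of_disjoint hX hind hK (by simpa using he) (by simpa using hf)
      hik hil hjk hjl]
    simp

lemma sum_card_inter_edgeFinset [Fintype ι] [DecidableEq ι] (G : SimpleGraph ι)
    [DecidableRel G.Adj] :
    ∑ e ∈ G.edgeFinset, ∑ f ∈ G.edgeFinset, (e.toFinset ∩ f.toFinset).card
      = ∑ v, G.degree v ^ 2 := by
  have hdegree (v : ι) : ∑ e ∈ G.edgeFinset, (if v ∈ e then 1 else 0) = G.degree v := by
    rw [← G.card_incidenceFinset_eq_degree, G.incidenceFinset_eq_filter, Finset.card_filter]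
  have hcard (e f : Sym2 ι) : (e.toFinset ∩ f.toFinset).card
      = ∑ v, (if v ∈ e then 1 else 0) * (if v ∈ f then 1 else 0) := by
    simp only [ite_zero_mul_ite_zero, mul_one, ← Finset.card_filter]
    congr 1
    ext v
    simp
  simp only [hcard, ← hdegree, sq, Finset.sum_mul_sum]
  rw [Finset.sum_comm (s := Finset.univ)]
  exact Finset.sum_congr rfl fun e _ => Finset.sum_comm

theorem variance_sum_edgeFinset [Fintype ι] (G : SimpleGraph ι)
    [DecidableRel G.Adj] (hX : ∀ i, HasLaw (X i) ν P) (hind : iIndepFun X P)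
    (hK : MemLp (fun z : E × E => K s(z.1, z.2)) 2 (ν.prod ν)) :
    Var[fun ω => ∑ e ∈ G.edgeFinset, K (e.map (X · ω)); P]
      = Var[kernelProjection K ν; ν] * ∑ v, (G.degree v : ℝ) ^ 2
        + (Var[fun z : E × E => K s(z.1, z.2); ν.prod ν] - 2 * Var[kernelProjection K ν; ν])
          * G.edgeFinset.card := by
  classical
  have := hind.isProbabilityMeasure
  have hnotDiag {e : Sym2 ι} (he : e ∈ G.edgeFinset) : ¬ e.IsDiag :=
    G.not_isDiag_of_mem_edgeFinset he
  have hmem (e : Sym2 ι) (he : e ∈ G.edgeFinset) : MemLp (fun ω => K (e.map (X · ω))) 2 P := by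
    induction e with | _ i j
    exact memLp_edgeTerm hX hind hK (by simpa using hnotDiag he)
  rw [variance_fun_sum' hmem, Finset.sum_congr rfl fun e he => Finset.sum_congr rfl fun f hf =>
    covariance_edgeTerm hX hind hK (hnotDiag he) (hnotDiag hf)]
  simp only [Finset.sum_add_distrib, ← Finset.mul_sum, Finset.sum_ite_eq, Finset.sum_ite_mem,
    Finset.inter_self, Finset.sum_const, nsmul_one]
  congr 2
  exact_mod_cast sum_card_inter_edgeFinset G

theorem variance_sum_edgeFinset_top [Fintype ι] [DecidableEq ι]
    (hX : ∀ i, HasLaw (X i) ν P) (hind : iIndepFun X P)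
    (hK : MemLp (fun z : E × E => K s(z.1, z.2)) 2 (ν.prod ν)) :
    Var[fun ω => ∑ e ∈ (⊤ : SimpleGraph ι).edgeFinset, K (e.map (X · ω)); P]
      = Var[kernelProjection K ν; ν] * (Fintype.card ι * (Fintype.card ι - 1) ^ 2)
        + (Var[fun z : E × E => K s(z.1, z.2); ν.prod ν] - 2 * Var[kernelProjection K ν; ν])
          * (Fintype.card ι * (Fintype.card ι - 1) / 2) := by
  rw [variance_sum_edgeFinset ⊤ hX hind hK, SimpleGraph.card_edgeFinset_top_eq_card_choose_two,
    Nat.cast_choose_two]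
  congr 2
  simp only [SimpleGraph.complete_graph_degree, Finset.sum_const, Finset.card_univ, nsmul_eq_mul]
  rcases Nat.eq_zero_or_pos (Fintype.card ι) with h | h
  · simp [h]
  · rw [Nat.cast_pred h]

end EdgeStatistic

lemma sum_edgeFinset_top {ι M : Type*} [Fintype ι] [LinearOrder ι] [AddCommMonoid M]
    (f : Sym2 ι → M) :
    ∑ e ∈ (⊤ : SimpleGraph ι).edgeFinset, f e = ∑ i, ∑ j, if i < j then f s(i, j) else 0 := by
  rw [← Fintype.sum_prod_type', ← Finset.sum_filter]
  have h := Finset.sum_sym2_filter_not_isDiag Finset.univ f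
  convert h using 2
  · ext e; simp
  · ext z; simpa using fun h => h.ne

section UniformOn

variable {α E : Type*} [MeasurableSpace α] [MeasurableSingletonClass α] [NormedAddCommGroup E]

lemma integrable_uniformOn_of_finite {s : Set α} (hs : s.Finite) (f : α → E) :
    Integrable f (uniformOn s) := by
  have : IsFiniteMeasure (uniformOn s) :=
    inferInstanceAs (IsFiniteMeasure (ProbabilityTheory.cond _ s))
  have h : IntegrableOn f s (uniformOn s) := .of_finite hs
  have hmem : ∀ᵐ x ∂uniformOn s, x ∈ s := ae_cond_mem hs.measurableSet
  rwa [IntegrableOn, Measure.restrict_eq_self_of_ae_mem hmem] at h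

lemma integral_uniformOn_finset [NormedSpace ℝ E] [CompleteSpace E] (s : Finset α) (f : α → E) :
    ∫ x, f x ∂uniformOn (s : Set α) = (s.card : ℝ)⁻¹ • ∑ x ∈ s, f x := by
  have hint : IntegrableOn f s Measure.count := by
    have : IsFiniteMeasure (Measure.count.restrict (s : Set α)) := ⟨by simp⟩
    have h : IntegrableOn f s (Measure.count.restrict (s : Set α)) := .finset
    rwa [IntegrableOn, Measure.restrict_restrict_of_subset subset_rfl] at h
  rw [uniformOn, ProbabilityTheory.cond, integral_smul_measure, setIntegral_finset s hint,
    Measure.count_apply_finset]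
  simp [Measure.real]

end UniformOn

section DivisorFrequency

/-- The proportion of multiples of `d` among `1, …, n`. -/
noncomputable def divisorFrequency (n d : ℕ) : ℝ := (n / d : ℕ) / n

lemma divisorFrequency_of_notMem {n d : ℕ} (h : d ∉ Finset.Icc 1 n) : divisorFrequency n d = 0 := by
  have hdiv : n / d = 0 := Nat.div_eq_zero_iff.2 (by grind)
  rw [divisorFrequency, hdiv, Nat.cast_zero, zero_div]

lemma divisorFrequency_nonneg (n d : ℕ) : 0 ≤ divisorFrequency n d := by
  unfold divisorFrequency
  positivity

lemma divisorFrequency_le_inv (n d : ℕ) : divisorFrequency n d ≤ (d : ℝ)⁻¹ := by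
  refine div_le_of_le_mul₀ n.cast_nonneg (by positivity) ?_
  rw [inv_mul_eq_div]
  exact Nat.cast_div_le

lemma tendsto_divisorFrequency (d : ℕ) :
    Tendsto (fun n => divisorFrequency n d) atTop (nhds (d : ℝ)⁻¹) := by
  have h := (tendsto_nat_floor_mul_div_atTop (R := ℝ) (a := (d : ℝ)⁻¹) (by positivity)).comp
    tendsto_natCast_atTop_atTop
  refine h.congr fun n => ?_
  rw [Function.comp_apply, inv_mul_eq_div, Nat.floor_div_eq_div, divisorFrequency]

lemma integral_uniformOn_dvd (n d : ℕ) :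
    ∫ x, (if d ∣ x then 1 else 0 : ℝ) ∂uniformOn (Set.Icc 1 n) = divisorFrequency n d := by
  rw [← Finset.coe_Icc, integral_uniformOn_finset, ← Finset.sum_filter, Finset.sum_const,
    nsmul_one, Nat.card_Icc, Nat.add_sub_cancel, smul_eq_mul, inv_mul_eq_div, divisorFrequency]
  congr 2
  exact Nat.Ioc_filter_dvd_card_eq_div n d

lemma tendsto_tsum_mul_prod_divisorFrequency {ι κ : Type*} [Fintype κ] (c : ι → ℝ)
    (m : κ → ι → ℕ) (hsum : Summable fun i => c i * ∏ k, (m k i : ℝ)⁻¹) :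
    Tendsto (fun n => ∑' i, c i * ∏ k, divisorFrequency n (m k i)) atTop
      (nhds (∑' i, c i * ∏ k, (m k i : ℝ)⁻¹)) := by
  refine tendsto_tsum_of_dominated_convergence hsum.norm (fun i => ?_)
    (Eventually.of_forall fun n i => ?_)
  · exact (tendsto_finsetProd _ fun k _ => tendsto_divisorFrequency (m k i)).const_mul (c i)
  · rw [norm_mul, norm_mul, norm_prod, norm_prod]
    gcongr with k
    rw [norm_of_nonneg (divisorFrequency_nonneg _ _), norm_of_nonneg (by positivity)]
    exact divisorFrequency_le_inv _ _

end DivisorFrequency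

section LcmConvolution

open scoped ArithmeticFunction.zeta ArithmeticFunction.Moebius

/-- The von Sterneck (least common multiple) convolution
`(f ⊔ g)(m) = ∑_{lcm(d, e) = m} f(d) g(e)` of arithmetic functions, with `(f ⊔ g)(0) = 0`. -/
def lcmConvolution {R : Type*} [Semiring R] (f g : ArithmeticFunction R) :
    ArithmeticFunction R :=
  ⟨fun m => ∑ z ∈ m.divisors ×ˢ m.divisors with z.1.lcm z.2 = m, f z.1 * g z.2, by simp⟩

lemma lcmConvolution_apply {R : Type*} [Semiring R] (f g : ArithmeticFunction R) (m : ℕ) :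
    lcmConvolution f g m
      = ∑ z ∈ m.divisors ×ˢ m.divisors with z.1.lcm z.2 = m, f z.1 * g z.2 :=
  rfl

theorem lcmConvolution_mul_zeta {R : Type*} [Semiring R] (f g : ArithmeticFunction R) :
    lcmConvolution f g * (ζ : ArithmeticFunction R) = (f * ζ).pmul (g * ζ) := by
  ext m
  rcases eq_or_ne m 0 with rfl | hm
  · simp
  have hmaps (z : ℕ × ℕ) (hz : z ∈ m.divisors ×ˢ m.divisors) : z.1.lcm z.2 ∈ m.divisors := by
    simp only [Finset.mem_product, Nat.mem_divisors] at hz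
    exact Nat.mem_divisors.2 ⟨Nat.lcm_dvd hz.1.1 hz.2.1, hm⟩
  rw [ArithmeticFunction.coe_mul_zeta_apply, ArithmeticFunction.pmul_apply,
    ArithmeticFunction.coe_mul_zeta_apply, ArithmeticFunction.coe_mul_zeta_apply,
    Finset.sum_mul_sum, ← Finset.sum_product', ← Finset.sum_fiberwise_of_maps_to hmaps]
  refine Finset.sum_congr rfl fun l hl => ?_
  rw [lcmConvolution_apply]
  refine Finset.sum_congr (Finset.ext fun z => ?_) fun _ _ => rfl
  simp only [Finset.mem_filter, Finset.mem_product, Nat.mem_divisors] at hl ⊢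
  have hl0 : l ≠ 0 := ne_zero_of_dvd_ne_zero hm hl.1
  constructor
  · rintro ⟨⟨⟨hd, -⟩, he, -⟩, rfl⟩
    exact ⟨⟨⟨hd.trans hl.1, hm⟩, he.trans hl.1, hm⟩, rfl⟩
  · rintro ⟨-, rfl⟩
    exact ⟨⟨⟨Nat.dvd_lcm_left _ _, hl0⟩, Nat.dvd_lcm_right _ _, hl0⟩, rfl⟩

lemma isMultiplicative_lcmConvolution {R : Type*} [CommRing R] {f g : ArithmeticFunction R}
    (hf : f.IsMultiplicative) (hg : g.IsMultiplicative) :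
    (lcmConvolution f g).IsMultiplicative := by
  have heq : lcmConvolution f g
      = (f * (ζ : ArithmeticFunction R)).pmul (g * ζ) * (μ : ArithmeticFunction R) := by
    rw [← lcmConvolution_mul_zeta, mul_assoc, ArithmeticFunction.coe_zeta_mul_coe_moebius, mul_one]
  have hζ : (ζ : ArithmeticFunction R).IsMultiplicative :=
    ArithmeticFunction.isMultiplicative_zeta.natCast
  rw [heq]
  exact ((hf.mul hζ).pmul (hg.mul hζ)).mul ArithmeticFunction.isMultiplicative_moebius.intCast

lemma mul_zeta_apply_prime_pow {R : Type*} [Semiring R] (f : ArithmeticFunction R) {p : ℕ}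
    (hp : p.Prime) (k : ℕ) :
    (f * (ζ : ArithmeticFunction R)) (p ^ k) = ∑ j ∈ Finset.range (k + 1), f (p ^ j) := by
  rw [ArithmeticFunction.coe_mul_zeta_apply, Nat.sum_divisors_prime_pow hp]

lemma lcmConvolution_apply_prime_pow_succ {R : Type*} [Ring R] (f g : ArithmeticFunction R)
    {p : ℕ} (hp : p.Prime) (k : ℕ) :
    lcmConvolution f g (p ^ (k + 1))
      = (f * (ζ : ArithmeticFunction R)).pmul (g * ζ) (p ^ (k + 1))
        - (f * (ζ : ArithmeticFunction R)).pmul (g * ζ) (p ^ k) := by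
  rw [← lcmConvolution_mul_zeta, mul_zeta_apply_prime_pow _ hp, mul_zeta_apply_prime_pow _ hp,
    Finset.sum_range_succ, add_sub_cancel_left]

lemma tsum_lcm_fiber_eq_lcmConvolution {R : Type*} [Semiring R] [TopologicalSpace R]
    (f g : ArithmeticFunction R) (m : ℕ) :
    ∑' z : (fun z : ℕ × ℕ => z.1.lcm z.2) ⁻¹' {m}, f z.1.1 * g z.1.2 = lcmConvolution f g m := by
  rcases eq_or_ne m 0 with rfl | hm
  · have hzero (z : (fun z : ℕ × ℕ => z.1.lcm z.2) ⁻¹' {0}) : f z.1.1 * g z.1.2 = 0 := by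
      rcases Nat.lcm_eq_zero_iff.1 z.2 with hz | hz <;> simp [hz]
    rw [tsum_congr hzero, tsum_zero, ArithmeticFunction.map_zero]
  · have hset : (fun z : ℕ × ℕ => z.1.lcm z.2) ⁻¹' {m}
        = ↑({z ∈ m.divisors ×ˢ m.divisors | z.1.lcm z.2 = m} : Finset (ℕ × ℕ)) := by
      ext z
      simp only [Set.mem_preimage, Set.mem_singleton_iff, Finset.coe_filter, Finset.mem_product,
        Nat.mem_divisors, Set.mem_ofPred_eq]
      refine ⟨?_, fun hz => hz.2⟩
      rintro rfl
      exact ⟨⟨⟨Nat.dvd_lcm_left _ _, hm⟩, Nat.dvd_lcm_right _ _, hm⟩, rfl⟩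
    rw [hset, Finset.tsum_subtype' _ fun z : ℕ × ℕ => f z.1 * g z.2, lcmConvolution_apply]

theorem hasSum_lcmConvolution_mul {R : Type*} [NormedField R] [CompleteSpace R]
    (f g : ArithmeticFunction R) (h : ℕ → R)
    (hsum : Summable fun z : ℕ × ℕ => f z.1 * g z.2 * h (z.1.lcm z.2)) :
    HasSum (fun m => lcmConvolution f g m * h m)
      (∑' z : ℕ × ℕ, f z.1 * g z.2 * h (z.1.lcm z.2)) := by
  have hfiber (m : ℕ) : ∑' z : (fun z : ℕ × ℕ => z.1.lcm z.2) ⁻¹' {m},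
      f z.1.1 * g z.1.2 * h (z.1.1.lcm z.1.2) = lcmConvolution f g m * h m := by
    rw [← tsum_lcm_fiber_eq_lcmConvolution, ← tsum_mul_right]
    exact tsum_congr fun z => congrArg (f z.1.1 * g z.1.2 * h ·) z.2
  simpa only [hfiber] using hsum.hasSum.tsum_fiberwise fun z : ℕ × ℕ => z.1.lcm z.2

end LcmConvolution

section MoebiusDivId

open scoped ArithmeticFunction.zeta ArithmeticFunction.Moebius

/-- The multiplicative function `d ↦ μ(d) / d`. -/
noncomputable def moebiusDivId : ArithmeticFunction ℝ :=
  (μ : ArithmeticFunction ℝ).pdiv (ArithmeticFunction.id : ArithmeticFunction ℝ)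

lemma moebiusDivId_apply (d : ℕ) : moebiusDivId d = μ d * (d : ℝ)⁻¹ := by
  simp [moebiusDivId, div_eq_mul_inv]

lemma isMultiplicative_moebiusDivId : moebiusDivId.IsMultiplicative :=
  ArithmeticFunction.isMultiplicative_moebius.intCast.pdiv
    ArithmeticFunction.isMultiplicative_id.natCast

lemma abs_moebiusDivId_le (d : ℕ) : |moebiusDivId d| ≤ (d : ℝ)⁻¹ := by
  rw [moebiusDivId_apply, abs_mul, abs_inv, Nat.abs_cast]
  exact mul_le_of_le_one_left (by positivity)
    (mod_cast ArithmeticFunction.abs_moebius_le_one (n := d))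

lemma moebiusDivId_mul_zeta_apply_prime_pow_succ {p : ℕ} (hp : p.Prime) (k : ℕ) :
    (moebiusDivId * (ζ : ArithmeticFunction ℝ)) (p ^ (k + 1)) = 1 - (p : ℝ)⁻¹ := by
  have hsq (j : ℕ) : moebiusDivId (p ^ (j + 2)) = 0 := by
    rw [moebiusDivId_apply, ArithmeticFunction.moebius_apply_prime_pow hp (by positivity)]
    simp
  rw [mul_zeta_apply_prime_pow _ hp, Finset.sum_range_succ', Finset.sum_range_succ',
    Finset.sum_eq_zero fun j _ => hsq j]
  simp [moebiusDivId_apply, ArithmeticFunction.moebius_apply_prime hp, ← sub_eq_neg_add]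

lemma lcmConvolution_moebiusDivId_apply_prime {p : ℕ} (hp : p.Prime) :
    lcmConvolution moebiusDivId moebiusDivId p = -2 * (p : ℝ)⁻¹ + (p : ℝ)⁻¹ ^ 2 := by
  have h := lcmConvolution_apply_prime_pow_succ moebiusDivId moebiusDivId hp 0
  have hone : (moebiusDivId * (ζ : ArithmeticFunction ℝ)) 1 = 1 :=
    (isMultiplicative_moebiusDivId.mul ArithmeticFunction.isMultiplicative_zeta.natCast).map_one
  rw [ArithmeticFunction.pmul_apply, ArithmeticFunction.pmul_apply,
    moebiusDivId_mul_zeta_apply_prime_pow_succ hp, zero_add, pow_one, pow_zero, hone] at h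
  rw [h]
  ring

lemma lcmConvolution_moebiusDivId_apply_prime_pow {p : ℕ} (hp : p.Prime) (k : ℕ) :
    lcmConvolution moebiusDivId moebiusDivId (p ^ (k + 2)) = 0 := by
  rw [lcmConvolution_apply_prime_pow_succ _ _ hp, ArithmeticFunction.pmul_apply,
    ArithmeticFunction.pmul_apply, moebiusDivId_mul_zeta_apply_prime_pow_succ hp,
    moebiusDivId_mul_zeta_apply_prime_pow_succ hp, sub_self]

lemma tsum_moebiusDivId_mul_inv : ∑' d : ℕ, moebiusDivId d * (d : ℝ)⁻¹ = 6 / π ^ 2 := by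
  have hterm (d : ℕ) : LSeries.term (fun n => (μ n : ℂ)) 2 d
      = ((moebiusDivId d * (d : ℝ)⁻¹ : ℝ) : ℂ) := by
    rcases eq_or_ne d 0 with rfl | hd
    · simp
    · rw [LSeries.term_of_ne_zero hd, moebiusDivId_apply]
      push_cast
      rw [mul_assoc, ← sq, inv_pow, ← div_eq_mul_inv]
      norm_cast
  have h := ArithmeticFunction.LSeries_zeta_mul_Lseries_moebius (s := 2) (by norm_num)
  rw [ArithmeticFunction.LSeries_zeta_eq_riemannZeta (by norm_num), riemannZeta_two, LSeries,
    tsum_congr hterm, ← Complex.ofReal_tsum] at h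
  norm_cast at h
  rw [← inv_div]
  exact eq_inv_of_mul_eq_one_right h

lemma sqrt_mul_sqrt_le_lcm (d e : ℕ) : √d * √e ≤ d.lcm e := by
  rcases eq_or_ne d 0 with rfl | hd
  · simp
  rcases eq_or_ne e 0 with rfl | he
  · simp
  have hlcm : 0 < d.lcm e := Nat.lcm_pos (by positivity) (by positivity)
  have hd_le : d ≤ d.lcm e := Nat.le_of_dvd hlcm (Nat.dvd_lcm_left d e)
  have he_le : e ≤ d.lcm e := Nat.le_of_dvd hlcm (Nat.dvd_lcm_right d e)
  rw [← Real.sqrt_mul d.cast_nonneg]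
  refine Real.sqrt_le_iff.2 ⟨by positivity, ?_⟩
  rw [sq]
  exact mod_cast Nat.mul_le_mul hd_le he_le

lemma inv_lcm_le (d e : ℕ) : (d.lcm e : ℝ)⁻¹ ≤ (√d)⁻¹ * (√e)⁻¹ := by
  rcases eq_or_ne d 0 with rfl | hd
  · simp
  rcases eq_or_ne e 0 with rfl | he
  · simp
  rw [← mul_inv]
  exact inv_anti₀ (by positivity) (sqrt_mul_sqrt_le_lcm d e)

lemma summable_inv_mul_inv_sqrt : Summable fun d : ℕ => (d : ℝ)⁻¹ * (√d)⁻¹ := by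
  refine (Real.summable_nat_rpow_inv.2 (show (1 : ℝ) < 3 / 2 by norm_num)).congr fun d => ?_
  rw [← mul_inv, Real.sqrt_eq_rpow, ← Real.rpow_one_add' d.cast_nonneg (by norm_num)]
  norm_num

lemma summable_moebiusDivId_mul_moebiusDivId_mul_inv_lcm :
    Summable fun z : ℕ × ℕ =>
      moebiusDivId z.1 * moebiusDivId z.2 * (z.1.lcm z.2 : ℝ)⁻¹ := by
  have hbound : Summable fun z : ℕ × ℕ =>
      (z.1 : ℝ)⁻¹ * (√z.1)⁻¹ * ((z.2 : ℝ)⁻¹ * (√z.2)⁻¹) :=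
    summable_inv_mul_inv_sqrt.mul_of_nonneg summable_inv_mul_inv_sqrt
      (fun d => by positivity) (fun d => by positivity)
  refine .of_norm_bounded hbound fun z => ?_
  calc ‖moebiusDivId z.1 * moebiusDivId z.2 * (z.1.lcm z.2 : ℝ)⁻¹‖
      = |moebiusDivId z.1| * |moebiusDivId z.2| * (z.1.lcm z.2 : ℝ)⁻¹ := by
        rw [norm_mul, norm_mul, norm_of_nonneg (inv_nonneg.2 (Nat.cast_nonneg _)), norm_eq_abs,
          norm_eq_abs]
    _ ≤ (z.1 : ℝ)⁻¹ * (z.2 : ℝ)⁻¹ * ((√z.1)⁻¹ * (√z.2)⁻¹) := by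
        gcongr
        exacts [abs_moebiusDivId_le _, abs_moebiusDivId_le _, inv_lcm_le _ _]
    _ = (z.1 : ℝ)⁻¹ * (√z.1)⁻¹ * ((z.2 : ℝ)⁻¹ * (√z.2)⁻¹) := mul_mul_mul_comm _ _ _ _

theorem tsum_moebiusDivId_mul_moebiusDivId_mul_inv_lcm :
    ∑' z : ℕ × ℕ, moebiusDivId z.1 * moebiusDivId z.2 * (z.1.lcm z.2 : ℝ)⁻¹
      = ∏' p : Nat.Primes, (1 - 2 / (p : ℝ) ^ 2 + 1 / (p : ℝ) ^ 3) := by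
  set κ := lcmConvolution moebiusDivId moebiusDivId with hκ
  have hmult : κ.IsMultiplicative :=
    isMultiplicative_lcmConvolution isMultiplicative_moebiusDivId isMultiplicative_moebiusDivId
  have hquot (m : ℕ) : κ.pdiv (ArithmeticFunction.id : ArithmeticFunction ℝ) m
      = κ m * (m : ℝ)⁻¹ := by
    simp [div_eq_mul_inv]
  have hsum := hasSum_lcmConvolution_mul moebiusDivId moebiusDivId (fun m => (m : ℝ)⁻¹)
    summable_moebiusDivId_mul_moebiusDivId_mul_inv_lcm
  have heuler := (hmult.pdiv ArithmeticFunction.isMultiplicative_id.natCast).eulerProduct_tprod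
    (by simpa only [hquot] using hsum.summable.norm)
  simp only [hquot] at heuler
  rw [← hsum.tsum_eq, ← heuler]
  refine tprod_congr fun p => ?_
  rw [tsum_eq_sum (s := Finset.range 2)]
  · rw [Finset.sum_range_succ, Finset.sum_range_one, pow_zero, pow_one, hmult.map_one, hκ,
      lcmConvolution_moebiusDivId_apply_prime p.2]
    simp only [Nat.cast_one]
    ring
  · intro j hj
    have hj2 : 2 ≤ j := not_lt.1 fun h => hj (Finset.mem_range.2 h)
    obtain ⟨k, rfl⟩ := Nat.exists_eq_add_of_le' hj2
    rw [hκ, lcmConvolution_moebiusDivId_apply_prime_pow p.2, zero_mul]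

lemma summable_moebiusDivId_mul_inv : Summable fun d : ℕ => moebiusDivId d * (d : ℝ)⁻¹ := by
  refine .of_norm_bounded (Real.summable_nat_pow_inv.2 one_lt_two) fun d => ?_
  rw [norm_mul, norm_of_nonneg (inv_nonneg.2 d.cast_nonneg), ← inv_pow, sq]
  gcongr
  exact abs_moebiusDivId_le d

end MoebiusDivId

section CoprimeKernel

local notation "𝒰[" n "]" => uniformOn (Set.Icc 1 n)

open scoped ArithmeticFunction.zeta ArithmeticFunction.Moebius

/-- The indicator of coprimality, as a symmetric kernel on `ℕ`. -/
noncomputable def coprimeKernel : Sym2 ℕ → ℝ :=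
  Sym2.lift ⟨fun x y => if x.gcd y = 1 then 1 else 0, fun x y => by simp only [Nat.gcd_comm]⟩

lemma coprimeKernel_mk (x y : ℕ) : coprimeKernel s(x, y) = if x.gcd y = 1 then 1 else 0 := rfl

lemma coprimeKernel_sq (e : Sym2 ℕ) : coprimeKernel e ^ 2 = coprimeKernel e := by
  induction e with | _ x y
  rw [coprimeKernel_mk]
  split_ifs <;> simp

lemma memLp_coprimeKernel (ν : Measure ℕ) [IsFiniteMeasure ν] :
    MemLp (fun z : ℕ × ℕ => coprimeKernel s(z.1, z.2)) 2 (ν.prod ν) := by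
  refine memLp_of_bounded (a := 0) (b := 1) (ae_of_all _ fun z => ?_)
    (measurable_of_countable _).aestronglyMeasurable 2
  rw [coprimeKernel_mk]
  split_ifs <;> simp

lemma coprimeKernel_eq_sum_moebius {n x : ℕ} (hx : x ∈ Finset.Icc 1 n) (y : ℕ) :
    coprimeKernel s(x, y)
      = ∑ d ∈ Finset.Icc 1 n, (μ d : ℝ) * (if d ∣ x then 1 else 0) * (if d ∣ y then 1 else 0) := by
  obtain ⟨hx1, hxn⟩ := Finset.mem_Icc.1 hx
  have hdivisors : (x.gcd y).divisors = {d ∈ Finset.Icc 1 n | d ∣ x ∧ d ∣ y} := by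
    ext d
    simp only [Nat.mem_divisors, Nat.dvd_gcd_iff, Finset.mem_filter, Finset.mem_Icc]
    refine ⟨fun ⟨hd, _⟩ => ⟨⟨Nat.pos_of_dvd_of_pos hd.1 hx1, ?_⟩, hd⟩, fun ⟨_, hd⟩ => ⟨hd, ?_⟩⟩
    · exact (Nat.le_of_dvd hx1 hd.1).trans hxn
    · exact (Nat.gcd_pos_of_pos_left y hx1).ne'
  calc coprimeKernel s(x, y)
      = ((μ : ArithmeticFunction ℝ) * (ζ : ArithmeticFunction ℝ)) (x.gcd y) := by
        rw [ArithmeticFunction.coe_moebius_mul_coe_zeta, ArithmeticFunction.one_apply,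
          coprimeKernel_mk]
    _ = ∑ d ∈ Finset.Icc 1 n with d ∣ x ∧ d ∣ y, (μ d : ℝ) := by
        rw [ArithmeticFunction.coe_mul_zeta_apply, hdivisors]
        rfl
    _ = _ := by
        rw [Finset.sum_filter]
        refine Finset.sum_congr rfl fun d _ => ?_
        rw [mul_assoc, ite_zero_mul_ite_zero, mul_one, mul_ite, mul_one, mul_zero]

lemma kernelProjection_coprimeKernel {n x : ℕ} (hx : x ∈ Finset.Icc 1 n) :
    kernelProjection coprimeKernel 𝒰[n] x
      = ∑ d ∈ Finset.Icc 1 n, (μ d : ℝ) * divisorFrequency n d * if d ∣ x then 1 else 0 := by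
  have hint (f : ℕ → ℝ) : Integrable f 𝒰[n] :=
    integrable_uniformOn_of_finite (Set.finite_Icc 1 n) f
  simp only [kernelProjection, coprimeKernel_eq_sum_moebius hx]
  rw [integral_finsetSum _ fun d _ => hint _]
  refine Finset.sum_congr rfl fun d _ => ?_
  rw [integral_const_mul, integral_uniformOn_dvd, mul_right_comm]

lemma kernelProjection_coprimeKernel_ae_eq (n : ℕ) :
    kernelProjection coprimeKernel 𝒰[n] =ᵐ[𝒰[n]] fun x =>
      ∑ d ∈ Finset.Icc 1 n, (μ d : ℝ) * divisorFrequency n d * if d ∣ x then 1 else 0 := by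
  have hmem : ∀ᵐ x ∂𝒰[n], x ∈ Set.Icc 1 n := ae_cond_mem measurableSet_Icc
  filter_upwards [hmem] with x hx
  exact kernelProjection_coprimeKernel (Finset.mem_Icc.2 hx)

lemma integral_kernelProjection_coprimeKernel (n : ℕ) :
    ∫ x, kernelProjection coprimeKernel 𝒰[n] x ∂𝒰[n]
      = ∑' d : ℕ, (μ d : ℝ) * ∏ _k : Fin 2, divisorFrequency n d := by
  have hint (f : ℕ → ℝ) : Integrable f 𝒰[n] :=
    integrable_uniformOn_of_finite (Set.finite_Icc 1 n) f
  rw [integral_congr_ae (kernelProjection_coprimeKernel_ae_eq n),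
    integral_finsetSum _ fun d _ => hint _, tsum_eq_sum (s := Finset.Icc 1 n)]
  · refine Finset.sum_congr rfl fun d _ => ?_
    rw [integral_const_mul, integral_uniformOn_dvd, Fin.prod_univ_two, mul_assoc]
  · intro d hd
    rw [Fin.prod_univ_two, divisorFrequency_of_notMem hd, mul_zero, mul_zero]

lemma integral_kernelProjection_coprimeKernel_sq (n : ℕ) :
    ∫ x, kernelProjection coprimeKernel 𝒰[n] x ^ 2 ∂𝒰[n]
      = ∑' z : ℕ × ℕ, (μ z.1 : ℝ) * μ z.2
          * ∏ k : Fin 3, divisorFrequency n (![z.1, z.2, z.1.lcm z.2] k) := by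
  have hint (f : ℕ → ℝ) : Integrable f 𝒰[n] :=
    integrable_uniformOn_of_finite (Set.finite_Icc 1 n) f
  have hsq (x : ℕ) :
      (∑ d ∈ Finset.Icc 1 n, (μ d : ℝ) * divisorFrequency n d * if d ∣ x then 1 else 0) ^ 2
        = ∑ z ∈ Finset.Icc 1 n ×ˢ Finset.Icc 1 n, (μ z.1 : ℝ) * μ z.2
          * (divisorFrequency n z.1 * divisorFrequency n z.2)
          * if z.1.lcm z.2 ∣ x then 1 else 0 := by
    rw [sq, Finset.sum_mul_sum, ← Finset.sum_product']
    refine Finset.sum_congr rfl fun z _ => ?_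
    rw [mul_mul_mul_comm, ite_zero_mul_ite_zero, mul_mul_mul_comm, mul_one]
    simp only [Nat.lcm_dvd_iff]
  have hae : (fun x => kernelProjection coprimeKernel 𝒰[n] x ^ 2)
      =ᵐ[𝒰[n]] fun x => ∑ z ∈ Finset.Icc 1 n ×ˢ Finset.Icc 1 n,
        (μ z.1 : ℝ) * μ z.2 * (divisorFrequency n z.1 * divisorFrequency n z.2)
          * if z.1.lcm z.2 ∣ x then 1 else 0 := by
    filter_upwards [kernelProjection_coprimeKernel_ae_eq n] with x hx
    rw [hx, hsq]
  rw [integral_congr_ae hae, integral_finsetSum _ fun z _ => hint _,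
    tsum_eq_sum (s := Finset.Icc 1 n ×ˢ Finset.Icc 1 n)]
  · refine Finset.sum_congr rfl fun z _ => ?_
    rw [integral_const_mul, integral_uniformOn_dvd, mul_assoc, Fin.prod_univ_three]
    rfl
  · intro z hz
    rw [Finset.mem_product, not_and_or] at hz
    rcases hz with hz | hz <;> simp [Fin.prod_univ_three, divisorFrequency_of_notMem hz]

lemma tendsto_integral_kernelProjection_coprimeKernel :
    Tendsto (fun n => ∫ x, kernelProjection coprimeKernel 𝒰[n] x ∂𝒰[n]) atTop
      (nhds (6 / π ^ 2)) := by
  have hterm (d : ℕ) : (μ d : ℝ) * ∏ _k : Fin 2, (d : ℝ)⁻¹ = moebiusDivId d * (d : ℝ)⁻¹ := by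
    rw [Fin.prod_univ_two, moebiusDivId_apply, mul_assoc]
  have h := tendsto_tsum_mul_prod_divisorFrequency (fun d => (μ d : ℝ)) (fun _ : Fin 2 => id)
    (by simpa only [id, hterm] using summable_moebiusDivId_mul_inv)
  simpa only [id, hterm, tsum_moebiusDivId_mul_inv, integral_kernelProjection_coprimeKernel] using h

lemma tendsto_integral_kernelProjection_coprimeKernel_sq :
    Tendsto (fun n => ∫ x, kernelProjection coprimeKernel 𝒰[n] x ^ 2 ∂𝒰[n]) atTop
      (nhds (∏' p : Nat.Primes, (1 - 2 / (p : ℝ) ^ 2 + 1 / (p : ℝ) ^ 3))) := by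
  have hterm (z : ℕ × ℕ) : (μ z.1 : ℝ) * μ z.2 * ∏ k : Fin 3, (![z.1, z.2, z.1.lcm z.2] k : ℝ)⁻¹
      = moebiusDivId z.1 * moebiusDivId z.2 * (z.1.lcm z.2 : ℝ)⁻¹ := by
    rw [moebiusDivId_apply, moebiusDivId_apply, mul_mul_mul_comm, mul_assoc (_ * _),
      Fin.prod_univ_three]
    rfl
  have h := tendsto_tsum_mul_prod_divisorFrequency (fun z : ℕ × ℕ => (μ z.1 : ℝ) * μ z.2)
    (fun (k : Fin 3) z => ![z.1, z.2, z.1.lcm z.2] k)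
    (by simpa only [hterm] using summable_moebiusDivId_mul_moebiusDivId_mul_inv_lcm)
  simpa only [hterm, tsum_moebiusDivId_mul_moebiusDivId_mul_inv_lcm,
    integral_kernelProjection_coprimeKernel_sq] using h

lemma isProbabilityMeasure_uniformOn_Icc {n : ℕ} (hn : n ≠ 0) :
    IsProbabilityMeasure 𝒰[n] :=
  isProbabilityMeasure_uniformOn (Set.finite_Icc 1 n) (Set.nonempty_Icc.2 (Nat.pos_of_ne_zero hn))

theorem tendsto_variance_kernelProjection_coprimeKernel :
    Tendsto (fun n => Var[kernelProjection coprimeKernel 𝒰[n]; 𝒰[n]]) atTop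
      (nhds (∏' p : Nat.Primes, (1 - 2 / (p : ℝ) ^ 2 + 1 / (p : ℝ) ^ 3) - 36 / π ^ 4)) := by
  have h := tendsto_integral_kernelProjection_coprimeKernel_sq.sub
    (tendsto_integral_kernelProjection_coprimeKernel.pow 2)
  rw [div_pow, ← pow_mul, show (6 : ℝ) ^ 2 = 36 by norm_num] at h
  refine h.congr' ?_
  filter_upwards [eventually_ne_atTop 0] with n hn
  have := isProbabilityMeasure_uniformOn_Icc hn
  exact (variance_eq_sub (memLp_kernelProjection (memLp_coprimeKernel _))).symm

theorem tendsto_variance_coprimeKernel :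
    Tendsto (fun n => Var[fun z : ℕ × ℕ => coprimeKernel s(z.1, z.2); 𝒰[n].prod 𝒰[n]]) atTop
      (nhds (6 / π ^ 2 - (6 / π ^ 2) ^ 2)) := by
  refine (tendsto_integral_kernelProjection_coprimeKernel.sub
    (tendsto_integral_kernelProjection_coprimeKernel.pow 2)).congr' ?_
  filter_upwards [eventually_ne_atTop 0] with n hn
  have := isProbabilityMeasure_uniformOn_Icc hn
  rw [variance_eq_sub (memLp_coprimeKernel _),
    integral_kernelProjection (memLp_coprimeKernel _)]
  simp only [Pi.pow_apply, coprimeKernel_sq]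

lemma hasLaw_eval_unifVec {n : ℕ} (hn : n ≠ 0) (i : Fin n) :
    HasLaw (fun ω : Fin n → ℕ => ω i) 𝒰[n] (unifVec n) := by
  have := isProbabilityMeasure_uniformOn_Icc hn
  exact (measurePreserving_eval (fun _ : Fin n => 𝒰[n]) i).hasLaw

lemma iIndepFun_eval_unifVec {n : ℕ} (hn : n ≠ 0) :
    iIndepFun (fun (i : Fin n) (ω : Fin n → ℕ) => ω i) (unifVec n) := by
  have := isProbabilityMeasure_uniformOn_Icc hn
  exact iIndepFun_pi (X := fun _ x => x) fun _ => aemeasurable_id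

theorem variance_coprime_pairs {n : ℕ} (hn : n ≠ 0) :
    Var[fun ω : Fin n → ℕ => ∑ i : Fin n, ∑ j : Fin n,
        if i < j ∧ Nat.gcd (ω i) (ω j) = 1 then (1 : ℝ) else 0; unifVec n]
      = Var[kernelProjection coprimeKernel 𝒰[n]; 𝒰[n]] * (n * (n - 1) ^ 2)
        + (Var[fun z : ℕ × ℕ => coprimeKernel s(z.1, z.2); 𝒰[n].prod 𝒰[n]]
            - 2 * Var[kernelProjection coprimeKernel 𝒰[n]; 𝒰[n]])
          * (n * (n - 1) / 2) := by
  have := isProbabilityMeasure_uniformOn_Icc hn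
  have h := variance_sum_edgeFinset_top (hasLaw_eval_unifVec hn) (iIndepFun_eval_unifVec hn)
    (memLp_coprimeKernel _)
  simpa only [sum_edgeFinset_top, Sym2.map_mk, coprimeKernel_mk, ← ite_and, Fintype.card_fin]
    using h

end CoprimeKernel

lemma tendsto_completeGraph_div_cube {v w : ℕ → ℝ} {V W : ℝ} (hv : Tendsto v atTop (nhds V))
    (hw : Tendsto w atTop (nhds W)) :
    Tendsto (fun n : ℕ => (v n * (n * (n - 1) ^ 2) + (w n - 2 * v n) * (n * (n - 1) / 2))
      / (n : ℝ) ^ 3) atTop (nhds V) := by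
  have hinv : Tendsto (fun n : ℕ => (n : ℝ)⁻¹) atTop (nhds 0) := tendsto_inv_atTop_nhds_zero_nat
  have hfactor := hinv.const_sub 1
  have h := (hv.mul (hfactor.pow 2)).add
    (((hw.sub (hv.const_mul 2)).mul (hfactor.div_const 2)).mul hinv)
  rw [sub_zero, one_pow, mul_one, mul_zero, add_zero] at h
  refine h.congr' ?_
  filter_upwards [eventually_ne_atTop 0] with n hn
  field_simp

/-- `n⁻³·Var(∑_{1≤i<j≤n} 1_{gcd(X_i,X_j)=1})` converges to
`∏_p (1 − 2/p² + 1/p³) − 36/π⁴` as `n → ∞`. -/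
theorem variance_coprime_pairs_asymptotics :
    Tendsto
      (fun n : ℕ =>
        variance
          (fun ω : Fin n → ℕ =>
            ∑ i : Fin n, ∑ j : Fin n,
              if i < j ∧ Nat.gcd (ω i) (ω j) = 1 then (1 : ℝ) else 0)
          (unifVec n) / (n : ℝ) ^ 3)
      atTop
      (nhds (∏' p : Nat.Primes, (1 - 2 / (p : ℝ) ^ 2 + 1 / (p : ℝ) ^ 3) - 36 / π ^ 4)) := by
  refine (tendsto_completeGraph_div_cube tendsto_variance_kernelProjection_coprimeKernel
    tendsto_variance_coprimeKernel).congr' ?_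
  filter_upwards [eventually_ne_atTop 0] with n hn
  rw [variance_coprime_pairs hn]
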